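/- Incremental reconstruction: for any nested subsets S ⊆ S' ⊆ N, adding to the minimal feature of S the OR Harsanyi interactions of all subsets A ⊆ N that intersect S' but are disjoint from S yields the minimal feature of S', i.e., F(S') = F(S) + ∑_{A ⊆ N, A ∩ S' ≠ ∅, A ∩ S = ∅} I(A). -/

import Mathlib

/-! The theorem is Möbius inversion on the Boolean lattice. Inverting the definition of the
interactions gives `∑_{A ⊆ T} I(A) = -F(N \ T)` for every `T` (`sum_powerset_orInteraction`).
The sets `A` that meet `S'` and avoid `S` are exactly the subsets of `N \ S` that are not
subsets of `N \ S'`, so their interactions sum to `-F(S) - (-F(S'))`. -/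

/-- The OR Harsanyi interaction of a subset `A`, defined from the minimal-feature
map `F : Finset α → E` by `I(A) = -∑_{L ⊆ A} (-1)^{|A|-|L|} • F(N \ L)`,
where `N` is the full index set `Finset.univ`. -/
def orInteraction {α : Type*} [Fintype α] [DecidableEq α] {E : Type*} [AddCommGroup E]
    (F : Finset α → E) (A : Finset α) : E :=
  -∑ L ∈ A.powerset, ((-1 : ℤ) ^ (A.card - L.card)) • F (Finset.univ \ L)

/-- The alternating sum over the Boolean interval `[L, T]` vanishes unless `L = T`. -/
lemma sum_Icc_neg_one_pow {α : Type*} [DecidableEq α] {L T : Finset α} (h : L ⊆ T) :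
    ∑ A ∈ Finset.Icc L T, (-1 : ℤ) ^ (A.card - L.card) = if L = T then 1 else 0 := by
  have hd : ∀ B ∈ (T \ L).powerset, Disjoint L B := fun B hB =>
    Finset.disjoint_sdiff.mono_right (Finset.mem_powerset.mp hB)
  rw [Finset.Icc_eq_image_powerset h, Finset.sum_image]
  · have hc : ∀ B ∈ (T \ L).powerset,
        (-1 : ℤ) ^ ((L ∪ B).card - L.card) = (-1) ^ B.card := by
      intro B hB
      rw [Finset.card_union_of_disjoint (hd B hB), Nat.add_sub_cancel_left]
    rw [Finset.sum_congr rfl hc, Finset.sum_powerset_neg_one_pow_card]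
    refine if_congr ?_ rfl rfl
    rw [Finset.sdiff_eq_empty_iff_subset]
    exact ⟨fun h' => h.antisymm h', fun h' => h'.ge⟩
  · intro B hB C hC hBC
    have hBC : L ∪ B = L ∪ C := hBC
    rw [← Finset.union_sdiff_cancel_left (hd B hB), hBC,
      Finset.union_sdiff_cancel_left (hd C hC)]

/-- Möbius inversion of the definition of the OR interactions. -/
lemma sum_powerset_orInteraction {α : Type*} [Fintype α] [DecidableEq α]
    {E : Type*} [AddCommGroup E] (F : Finset α → E) (T : Finset α) :
    ∑ A ∈ T.powerset, orInteraction F A = -F (Finset.univ \ T) := by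
  simp only [orInteraction, Finset.sum_neg_distrib]
  rw [Finset.sum_comm' (t' := T.powerset) (s' := fun L => Finset.Icc L T)]
  · simp only [← Finset.sum_smul]
    rw [Finset.sum_congr rfl fun L hL => by
      rw [sum_Icc_neg_one_pow (Finset.mem_powerset.mp hL)]]
    simp [ite_smul]
  · intro A L
    simp only [Finset.mem_powerset, Finset.mem_Icc]
    exact ⟨fun h => ⟨⟨h.2, h.1⟩, h.2.trans h.1⟩, fun h => ⟨h.1.2, h.1.1⟩⟩

/-- Incremental reconstruction: for nested subsets `S ⊆ S' ⊆ N`,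
`F(S') = F(S) + ∑_{A ⊆ N, A ∩ S' ≠ ∅, A ∩ S = ∅} I(A)`. -/
theorem incremental_reconstruction {α : Type*} [Fintype α] [DecidableEq α]
    {E : Type*} [AddCommGroup E] (F : Finset α → E) (S S' : Finset α)
    (hSS' : S ⊆ S') :
    F S' =
      F S + ∑ A ∈ Finset.univ.powerset.filter
          (fun A : Finset α => (A ∩ S').Nonempty ∧ A ∩ S = ∅),
        orInteraction F A := by
  have hfilter : Finset.univ.powerset.filter
      (fun A : Finset α => (A ∩ S').Nonempty ∧ A ∩ S = ∅) =
      (Finset.univ \ S).powerset \ (Finset.univ \ S').powerset := by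
    ext A
    simp only [Finset.mem_filter, Finset.mem_sdiff, Finset.mem_powerset, Finset.subset_univ,
      true_and, Finset.subset_sdiff, ← Finset.disjoint_iff_inter_eq_empty,
      Finset.not_disjoint_iff_nonempty_inter]
    exact and_comm
  have hsub : (Finset.univ \ S').powerset ⊆ (Finset.univ \ S).powerset :=
    Finset.powerset_mono.mpr (Finset.sdiff_subset_sdiff subset_rfl hSS')
  rw [hfilter, Finset.sum_sdiff_eq_sub hsub, sum_powerset_orInteraction,
    sum_powerset_orInteraction, Finset.sdiff_sdiff_eq_self (Finset.subset_univ S),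
    Finset.sdiff_sdiff_eq_self (Finset.subset_univ S')]
  abel
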